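/- arXiv:2308.13120 — 3 statements merged into one kernel-verified Lean document; each statement's English description precedes it below -/
import Mathlib

section
/- (Sierra–Walton) Let k be a field of characteristic 0 and let W be the Witt algebra, i.e., the Lie algebra of k-linear derivations of the Laurent polynomial ring k[t, t⁻¹]. Then the universal enveloping algebra U(W) is not a Noetherian ring. -/
/-!
Write `E = t d/dt` and let `λ` be the constant-coefficient functional on `k[t, t⁻¹]`, so that
`λ ∘ E = 0`. Every derivation of `k[t, t⁻¹]` is `g E` for a unique Laurent polynomial `g`, and
`g E` acts on `N = k ⊕ k[t, t⁻¹]` by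

  `(z, f) ↦ (λ (E(g) f), E(g f))`.

This is a representation of the Witt algebra `W` (`rep`): an extension of a tensor density module
by the trivial module `k`. Let `J` be the left ideal of `U(W)` that annihilates the quotient
`N / k = k[t, t⁻¹]`. An element `u ∈ J` maps `N` into `k`, hence defines a functional `Ψ(u)` on
`k[t, t⁻¹]`. Since `U(W)` acts on the submodule `k` by scalars, `Ψ(b u)` is a multiple of `Ψ(u)`
for every `b ∈ U(W)` (`Psi_mul`). So if `J` were finitely generated, `Ψ(J)` would be
finite-dimensional (`Psi_mem_span`). But for `e n = t ^ n E` the element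

  `e (s - 1) e 1 + e (s + 1) e (-1) - 2 e s e 0`

lies in `J` and its functional is `-2` times the coefficient of `t ^ (-s)` (`rho_quad`). These
functionals, for `s ∈ ℤ`, are linearly independent, so `J` is not finitely generated.
-/
open LaurentPolynomial

namespace WittNotNoetherian

section

-- `Module.End` and `U(W)` carry the commutator bracket.
attribute [local instance] LieRing.ofAssociativeRing

variable {k : Type*} [Field k]

/-- The linear map `T n ↦ n T n`, underlying `euler`. -/
noncomputable def eulerLin (k : Type*) [Field k] : k[T;T⁻¹] →ₗ[k] k[T;T⁻¹] :=
  (Finsupp.lsum k fun n : ℤ => (n : k) • AddMonoidAlgebra.lsingle n) ∘ₗ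
    (AddMonoidAlgebra.coeffLinearEquiv k).toLinearMap

lemma eulerLin_single (n : ℤ) (a : k) :
    eulerLin k (AddMonoidAlgebra.single n a) = (n : k) • AddMonoidAlgebra.single n a := by
  simp [eulerLin, -single_eq_C_mul_T]

lemma eulerLin_mul (f g : k[T;T⁻¹]) :
    eulerLin k (f * g) = f • eulerLin k g + g • eulerLin k f := by
  induction f using LaurentPolynomial.induction_on' with
  | add p q hp hq => simp only [add_mul, map_add, hp, hq, smul_eq_mul]; ring
  | C_mul_T n a =>
    induction g using LaurentPolynomial.induction_on' with
    | add p q hp hq => simp only [mul_add, map_add, hp, hq, smul_eq_mul]; ring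
    | C_mul_T m b =>
      simp only [← single_eq_C_mul_T, AddMonoidAlgebra.single_mul_single, eulerLin_single,
        smul_eq_mul, mul_smul_comm]
      rw [add_comm m n, mul_comm b a, ← add_smul]
      push_cast
      rw [add_comm (n : k)]

/-- The Euler derivation `E = t d/dt` of `k[t, t⁻¹]`. -/
noncomputable def euler (k : Type*) [Field k] : Derivation k k[T;T⁻¹] k[T;T⁻¹] :=
  Derivation.mk' (eulerLin k) eulerLin_mul

lemma euler_single (n : ℤ) (a : k) :
    euler k (AddMonoidAlgebra.single n a) = (n : k) • AddMonoidAlgebra.single n a :=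
  eulerLin_single n a

lemma euler_T (n : ℤ) : euler k (T n) = (n : k) • T n := euler_single n 1

/-- The constant coefficient of a Laurent polynomial `f`, i.e. the residue of `f dt / t`. -/
noncomputable def residue (k : Type*) [Field k] : k[T;T⁻¹] →ₗ[k] k :=
  Finsupp.lapply 0 ∘ₗ (AddMonoidAlgebra.coeffLinearEquiv k).toLinearMap

lemma residue_T (n : ℤ) : residue k (T n) = if n = 0 then 1 else 0 := by
  simp [residue]

lemma residue_euler (f : k[T;T⁻¹]) : residue k (euler k f) = 0 := by
  induction f using LaurentPolynomial.induction_on' with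
  | add p q hp hq => simp only [map_add, hp, hq, add_zero]
  | C_mul_T n a =>
    rw [← single_eq_C_mul_T, euler_single]
    by_cases hn : n = 0 <;> simp [residue, hn, -single_eq_C_mul_T]

/-- The Laurent polynomial `g` such that `D = g E`; see `eq_symb_smul_euler`. -/
noncomputable def symb : Derivation k k[T;T⁻¹] k[T;T⁻¹] →ₗ[k] k[T;T⁻¹] where
  toFun D := T (-1) * D (T 1)
  map_add' D D' := by simp [mul_add]
  map_smul' c D := by simp

lemma symb_apply (D : Derivation k k[T;T⁻¹] k[T;T⁻¹]) : symb D = T (-1) * D (T 1) := rfl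

lemma T_one_mul_symb (D : Derivation k k[T;T⁻¹] k[T;T⁻¹]) : T 1 * symb D = D (T 1) := by
  rw [symb_apply, ← mul_assoc, ← T_add]; simp

lemma eq_symb_smul_euler (D : Derivation k k[T;T⁻¹] k[T;T⁻¹]) : D = symb D • euler k := by
  have hone : (T (-1) * T 1 : k[T;T⁻¹]) = 1 := by rw [← T_add]; simp
  rw [← sub_eq_zero]
  set δ := D - symb D • euler k with hδ
  have h1 : δ (T 1) = 0 := by
    rw [hδ, Derivation.sub_apply, ← T_one_mul_symb, Derivation.smul_apply, euler_T, Int.cast_one,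
      one_smul, smul_eq_mul, mul_comm, sub_self]
  have h2 : δ (T (-1)) = 0 := by
    rw [δ.leibniz_of_mul_eq_one hone, h1, smul_zero]
  have hT : ∀ n : ℤ, δ (T n) = 0 := by
    intro n
    induction n using Int.induction_on with
    | zero => simp
    | succ n ih => rw [T_add, δ.leibniz, ih, h1, smul_zero, smul_zero, add_zero]
    | pred n ih => rw [T_sub, δ.leibniz, ih, h2, smul_zero, smul_zero, add_zero]
  ext1 f
  induction f using LaurentPolynomial.induction_on' with
  | add p q hp hq => rw [map_add, map_add, hp, hq]
  | C_mul_T n a => rw [← smul_eq_C_mul, Derivation.map_smul, hT n, smul_zero]; rfl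

lemma symb_lie (D₁ D₂ : Derivation k k[T;T⁻¹] k[T;T⁻¹]) :
    symb ⁅D₁, D₂⁆ = symb D₁ * euler k (symb D₂) - symb D₂ * euler k (symb D₁) := by
  have h : ∀ (D D' : Derivation k k[T;T⁻¹] k[T;T⁻¹]),
      D (D' (T 1)) = T 1 * (symb D * symb D' + symb D * euler k (symb D')) := by
    intro D D'
    have h2 : D (symb D') = symb D * euler k (symb D') := by
      conv_lhs => rw [eq_symb_smul_euler D]
      simp
    rw [← T_one_mul_symb D', D.leibniz, ← T_one_mul_symb D, h2]
    simp only [smul_eq_mul]; ring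
  have h3 : (T (-1) * T 1 : k[T;T⁻¹]) = 1 := by rw [← T_add]; simp
  rw [symb_apply, Derivation.commutator_apply, h, h]
  linear_combination (symb D₁ * euler k (symb D₂) - symb D₂ * euler k (symb D₁)) * h3

/-- The action of `g E` on `k ⊕ k[t, t⁻¹]`: `(z, f) ↦ (λ (E(g) f), E(g f))`, where `λ` is
`residue`. -/
noncomputable def act (g : k[T;T⁻¹]) : Module.End k (k × k[T;T⁻¹]) :=
  LinearMap.prod
    (residue k ∘ₗ LinearMap.mulLeft k (euler k g) ∘ₗ LinearMap.snd k k k[T;T⁻¹])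
    ((euler k : k[T;T⁻¹] →ₗ[k] k[T;T⁻¹]) ∘ₗ LinearMap.mulLeft k g ∘ₗ LinearMap.snd k k k[T;T⁻¹])

lemma act_apply (g : k[T;T⁻¹]) (x : k × k[T;T⁻¹]) :
    act g x = (residue k (euler k g * x.2), euler k (g * x.2)) := rfl

/-- The representation of the Witt algebra on `k ⊕ k[t, t⁻¹]`. In the first component,
compatibility with brackets is an integration by parts: `λ` vanishes on the image of `E`. -/
noncomputable def rep (k : Type*) [Field k] :
    Derivation k k[T;T⁻¹] k[T;T⁻¹] →ₗ⁅k⁆ Module.End k (k × k[T;T⁻¹]) where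
  toFun D := act (symb D)
  map_add' D D' := by
    refine LinearMap.ext fun x => ?_
    simp [act_apply, add_mul]
  map_smul' c D := by
    refine LinearMap.ext fun x => ?_
    simp [act_apply]
  map_lie' := by
    intro D D'
    refine LinearMap.ext fun x => ?_
    rw [LieRing.of_associative_ring_bracket, LinearMap.sub_apply, Module.End.mul_apply,
      Module.End.mul_apply]
    simp only [act_apply, symb_lie, Prod.mk_sub_mk]
    refine Prod.ext ?_ ?_
    · rw [← map_sub, ← sub_eq_zero, ← map_sub,
        ← residue_euler ((symb D * euler k (symb D') - symb D' * euler k (symb D)) * x.2)]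
      congr 1
      simp only [Derivation.leibniz, map_sub, smul_eq_mul]
      ring
    · simp only [Derivation.leibniz, map_sub, map_add, smul_eq_mul]
      ring

/-- The universal enveloping algebra of the Witt algebra. -/
abbrev U (k : Type*) [Field k] :=
  UniversalEnvelopingAlgebra k (Derivation k k[T;T⁻¹] k[T;T⁻¹])

/-- The extension of `rep` to the universal enveloping algebra. -/
noncomputable def rho (k : Type*) [Field k] : U k →ₐ[k] Module.End k (k × k[T;T⁻¹]) :=
  UniversalEnvelopingAlgebra.lift k (rep k)

/-- The universal enveloping algebra is generated by the Lie algebra. -/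
lemma eq_top_of_ι_mem (S : Subalgebra k (U k))
    (h : ∀ D, UniversalEnvelopingAlgebra.ι k D ∈ S) : S = ⊤ := by
  let j : Derivation k k[T;T⁻¹] k[T;T⁻¹] →ₗ⁅k⁆ S :=
    { toFun := fun D => ⟨UniversalEnvelopingAlgebra.ι k D, h D⟩
      map_add' := fun D D' => Subtype.ext (map_add _ D D')
      map_smul' := fun c D => Subtype.ext (map_smul _ c D)
      map_lie' := fun {D D'} => Subtype.ext (LieHom.map_lie _ D D') }
  have hid : S.val.comp (UniversalEnvelopingAlgebra.lift k j) = AlgHom.id k (U k) := by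
    refine UniversalEnvelopingAlgebra.hom_ext k (LieHom.ext fun D => ?_)
    change ((UniversalEnvelopingAlgebra.lift k j (UniversalEnvelopingAlgebra.ι k D) : S) : U k)
      = UniversalEnvelopingAlgebra.ι k D
    rw [UniversalEnvelopingAlgebra.lift_ι_apply]
    rfl
  refine eq_top_iff.2 fun u _ => ?_
  have := DFunLike.congr_fun hid u
  rw [AlgHom.id_apply] at this
  rw [← this]
  exact (UniversalEnvelopingAlgebra.lift k j u).2

/-- The summand `k` is a submodule, on which `U(W)` acts by scalars. -/
lemma exists_rho_eigenvalue (b : U k) : ∃ c : k, rho k b (1, 0) = c • (1, 0) := by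
  let S : Subalgebra k (U k) :=
    { carrier := {b | ∃ c : k, rho k b (1, 0) = c • (1, 0)}
      mul_mem' := by
        rintro a b ⟨c, hc⟩ ⟨d, hd⟩
        exact ⟨d * c, by rw [map_mul, Module.End.mul_apply, hd, map_smul, hc, mul_smul]⟩
      add_mem' := by
        rintro a b ⟨c, hc⟩ ⟨d, hd⟩
        exact ⟨c + d, by rw [map_add, LinearMap.add_apply, hc, hd, add_smul]⟩
      algebraMap_mem' := fun c => ⟨c, by rw [AlgHom.commutes]; rfl⟩ }
  have hS : S = ⊤ := eq_top_of_ι_mem S fun D => ⟨0, by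
    rw [rho, UniversalEnvelopingAlgebra.lift_ι_apply]
    change act (symb D) (1, 0) = _
    simp [act_apply]⟩
  exact (hS ▸ Algebra.mem_top : b ∈ S)

/-- The left ideal of `U(W)` annihilating the quotient `k[t, t⁻¹]` of `k ⊕ k[t, t⁻¹]` by `k`. -/
noncomputable def J (k : Type*) [Field k] : Submodule (U k) (U k) where
  carrier := {u | ∀ f, (rho k u (0, f)).2 = 0}
  zero_mem' := by simp
  add_mem' := by
    intro a b ha hb f
    simp [ha f, hb f]
  smul_mem' := by
    intro b u hu f
    obtain ⟨c, hc⟩ := exists_rho_eigenvalue b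
    have h : rho k u (0, f) = (rho k u (0, f)).1 • (1, 0) := by
      refine Prod.ext ?_ ?_ <;> simp [hu f]
    rw [smul_eq_mul, map_mul, Module.End.mul_apply, h, map_smul, hc]
    simp

/-- The functional `f ↦ (u (0, f)).1` attached to `u`. It is defined for every `u`, but is
well-behaved under left multiplication only for `u ∈ J`. -/
noncomputable def Psi (k : Type*) [Field k] : U k →ₗ[k] (k[T;T⁻¹] →ₗ[k] k) where
  toFun u := LinearMap.fst k k _ ∘ₗ rho k u ∘ₗ LinearMap.inr k k _
  map_add' a b := by ext; simp
  map_smul' c a := by ext; simp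

lemma Psi_apply (u : U k) (f) : Psi k u f = (rho k u (0, f)).1 := rfl

lemma Psi_mul (b u : U k) (hu : u ∈ J k) : ∃ c : k, Psi k (b * u) = c • Psi k u := by
  obtain ⟨c, hc⟩ := exists_rho_eigenvalue b
  refine ⟨c, LinearMap.ext fun f => ?_⟩
  have h : rho k u (0, f) = (rho k u (0, f)).1 • (1, 0) := by
    refine Prod.ext ?_ ?_ <;> simp [hu f]
  rw [Psi_apply, map_mul, Module.End.mul_apply, h, map_smul, hc]
  simp [Psi_apply, mul_comm]

/-- A generating set of the left ideal `J` spans the functionals `Psi k u`, `u ∈ J`, already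
over `k`. -/
lemma Psi_mem_span (s : Set (U k)) (hs : Submodule.span (U k) s = J k) (u : U k) (hu : u ∈ J k) :
    Psi k u ∈ Submodule.span k (Psi k '' s) := by
  rw [← hs] at hu
  induction hu using Submodule.span_induction with
  | mem x hx => exact Submodule.subset_span ⟨x, hx, rfl⟩
  | zero => simp
  | add x y _ _ hx hy => rw [map_add]; exact add_mem hx hy
  | smul b x hx ih =>
    obtain ⟨c, hc⟩ := Psi_mul b x (hs ▸ hx)
    rw [smul_eq_mul, hc]
    exact Submodule.smul_mem _ _ ih

/-- The element `t ^ n E` of the Witt algebra, viewed in `U(W)`. -/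
noncomputable def e (n : ℤ) : U k :=
  UniversalEnvelopingAlgebra.ι k ((T n : k[T;T⁻¹]) • euler k)

lemma rho_e (n : ℤ) (x : k × k[T;T⁻¹]) : rho k (e n) x = act (T n) x := by
  rw [rho, e, UniversalEnvelopingAlgebra.lift_ι_apply]
  change act (symb _) x = _
  congr 2
  simp only [symb_apply, Derivation.smul_apply, euler_T, smul_eq_mul]
  simp only [Int.cast_one, one_smul, ← T_add]
  congr 1
  ring

lemma rho_e_mul_e (n m j : ℤ) : rho k (e n * e m) (0, T j) =
    ((((n * (j + m)) : ℤ) : k) * (if n + m + j = 0 then 1 else 0),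
      (((j + m) * (j + m + n) : ℤ) : k) • T (n + m + j)) := by
  rw [map_mul, Module.End.mul_apply, rho_e, rho_e]
  simp only [act_apply, euler_T, ← T_add, mul_smul_comm, smul_mul_assoc, map_smul, residue_T,
    smul_smul, smul_eq_mul]
  rw [← add_assoc]
  refine Prod.ext ?_ ?_
  · push_cast; ring
  · rw [Derivation.map_smul, euler_T, smul_smul]; push_cast; congr 1; ring

/-- A second difference in `m` of the products `e (s - m) * e m`. On `k[t, t⁻¹]` these products
act by expressions affine in `m`, so it acts by zero there; the `k`-component is quadratic in `m`
and survives. -/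
noncomputable def quad (s : ℤ) : U k := e (s - 1) * e 1 + e (s + 1) * e (-1) - 2 * (e s * e 0)

lemma rho_quad (s j : ℤ) :
    rho k (quad s) (0, T j) = (-2 * (if s + j = 0 then 1 else 0), 0) := by
  have h2 : (2 : U k) * (e s * e 0) = e s * e 0 + e s * e 0 := two_mul _
  rw [quad, h2]
  simp only [map_sub, map_add, LinearMap.sub_apply, LinearMap.add_apply, rho_e_mul_e]
  have h1 : s - 1 + 1 + j = s + j := by ring
  have h3 : s + 1 + -1 + j = s + j := by ring
  have h4 : s + 0 + j = s + j := by ring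
  rw [h1, h3, h4]
  simp only [Prod.mk_sub_mk, Prod.mk_add_mk]
  refine Prod.ext ?_ ?_
  · by_cases h : s + j = 0
    · obtain rfl : j = -s := by omega
      simp; ring
    · simp [h]
  · simp only [← add_smul, ← sub_smul]
    push_cast
    convert zero_smul k _ using 2
    ring

lemma quad_mem (s : ℤ) : (quad s : U k) ∈ J k := by
  intro f
  induction f using LaurentPolynomial.induction_on' with
  | add p q hp hq =>
    have : ((0, p + q) : k × k[T;T⁻¹]) = (0, p) + (0, q) := by simp
    rw [this, map_add, Prod.snd_add, hp, hq, add_zero]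
  | C_mul_T n a =>
    have : ((0, C a * T n) : k × k[T;T⁻¹]) = a • (0, T n) := by simp [smul_eq_C_mul]
    rw [this, map_smul, rho_quad]
    simp

lemma linearIndependent_Psi_quad [CharZero k] :
    LinearIndependent k fun s : ℤ => Psi k (quad s) := by
  rw [linearIndependent_iff']
  intro t c hc i hi
  have h := LinearMap.congr_fun hc (T (-i))
  simp only [LinearMap.sum_apply, LinearMap.smul_apply, Psi_apply, rho_quad] at h
  rw [Finset.sum_eq_single i] at h
  · simpa using h
  · intro b _ hb
    have : ¬ (b + -i = 0) := by omega
    simp [this]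
  · exact fun h => absurd hi h

lemma exists_notMem_span {M : Type*} [AddCommGroup M] [Module k M] {v : ℤ → M}
    (hv : LinearIndependent k v) {t : Set M} (ht : t.Finite) :
    ∃ n, v n ∉ Submodule.span k t := by
  by_contra! h
  have hV : Module.Finite k (Submodule.span k t) := Module.Finite.span_of_finite k ht
  have hli : LinearIndependent k fun n : ℤ => (⟨v n, h n⟩ : Submodule.span k t) :=
    LinearIndependent.of_comp (Submodule.span k t).subtype hv
  have hfin : Finite ℤ := hli.finite
  exact not_finite ℤ

lemma not_isNoetherianRing_U [CharZero k] : ¬ IsNoetherianRing (U k) := by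
  intro hN
  obtain ⟨s, hfin, hs⟩ := Submodule.fg_def.1 (IsNoetherian.noetherian (J k))
  obtain ⟨n, hn⟩ : ∃ n : ℤ, Psi k (quad n) ∉ Submodule.span k (Psi k '' s) :=
    exists_notMem_span (linearIndependent_Psi_quad (k := k)) (hfin.image (Psi k))
  exact hn (Psi_mem_span (k := k) s hs (quad n) (quad_mem n))

end

end WittNotNoetherian

/-- (Sierra–Walton) The universal enveloping algebra of the Witt algebra, i.e. the Lie
algebra of `k`-linear derivations of `k[t, t⁻¹]`, is not Noetherian. -/
theorem wittAlgebra_enveloping_not_noetherian (k : Type*) [Field k] [CharZero k] :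
    ¬ IsNoetherianRing (UniversalEnvelopingAlgebra k
      (Derivation k (LaurentPolynomial k) (LaurentPolynomial k))) := by
  exact WittNotNoetherian.not_isNoetherianRing_U
end

section
/- Let k be a field of characteristic 0 and let g be a finite-dimensional Lie algebra over k. Then the universal enveloping algebra U(g) is semiprimitive, i.e., its Jacobson radical (the intersection of all maximal left ideals) is zero. -/
/-!
Write `U` for the enveloping algebra and `V ⊆ U` for the image of the Lie algebra. The units of `U`
turn out to be the nonzero scalars. If `x` lies in the Jacobson radical then `1 + x` is left
invertible, so `x` is a scalar, and a nonzero scalar cannot lie in the radical.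

That one-sided invertible elements are scalars follows once the associated graded algebra of `U` is
known to be a domain. In characteristic zero this can be seen from the bialgebra structure alone,
without knowing that `L → U` is injective. Let `y i` be a basis of `V`, and filter `U` by the
length of words in the `y i`. For every point `ξ : I → k` there is a functional on `U` which
vanishes at `1` and takes the value `ξ i` at `y i`; the `n`-th power of this functional under the
convolution product dual to the comultiplication vanishes on words of length less than `n`, and
sends a word `y i₁ ⋯ y iₙ` to `n! ξ i₁ ⋯ ξ iₙ` (`HasSymbol.conv`, `exists_hasSymbol`). After division
by `n!` it computes the value at `ξ` of the degree `n` symbol of an element, a polynomial in the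
`y i`. Words that are permutations of each other agree modulo shorter words, so an element of degree
at most `n` with vanishing symbol has degree less than `n` (`exists_symbol`). As symbols are
multiplicative and polynomials over an infinite field are determined by their values, degrees add
up under multiplication, and a left-invertible element has degree zero
(`mem_range_algebraMap_of_mul_eq_one`).
-/

open scoped TensorProduct

namespace EnvelopingSemiprimitive

variable {k A I : Type*} [Field k] [Ring A] [Algebra k A]

/-- The product in `A` of the word `l` in the generators `y`. -/
def word (y : I → A) (l : List I) : A := (l.map y).prod

lemma word_nil (y : I → A) : word y [] = 1 := rfl

lemma word_cons (y : I → A) (i : I) (l : List I) : word y (i :: l) = y i * word y l := by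
  simp [word]

lemma word_append (y : I → A) (l m : List I) : word y (l ++ m) = word y l * word y m := by
  simp [word]

/-- The span of the words of length strictly less than `n`. With the strict inequality `wordSpan k y 0`
is zero, so it serves as the term of degree `-1` of the filtration. -/
def wordSpan (k : Type*) [Field k] [Algebra k A] (y : I → A) (n : ℕ) : Submodule k A :=
  Submodule.span k {a | ∃ l : List I, l.length < n ∧ word y l = a}

lemma word_mem (y : I → A) {l : List I} {n : ℕ} (h : l.length < n) :
    word y l ∈ wordSpan k y n := Submodule.subset_span ⟨l, h, rfl⟩

lemma wordSpan_zero (y : I → A) : wordSpan k y 0 = ⊥ := by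
  simp [wordSpan]

lemma wordSpan_mono (y : I → A) {m n : ℕ} (h : m ≤ n) : wordSpan k y m ≤ wordSpan k y n :=
  Submodule.span_mono fun _ ⟨l, hl, e⟩ => ⟨l, hl.trans_le h, e⟩

lemma mul_mem_wordSpan (y : I → A) (i : I) {a : A} {n : ℕ} (h : a ∈ wordSpan k y n) :
    y i * a ∈ wordSpan k y (n + 1) := by
  induction h using Submodule.span_induction with
  | mem x hx =>
    obtain ⟨l, hl, rfl⟩ := hx
    rw [← word_cons]
    exact word_mem y (by simpa using hl)
  | zero => simp
  | add a b _ _ ha hb => rw [mul_add]; exact add_mem ha hb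
  | smul c a _ ha => rw [mul_smul_comm]; exact Submodule.smul_mem _ _ ha

/-- If the generators span a Lie subalgebra, then permuting the letters of a word only changes it by
shorter words. -/
lemma word_perm (y : I → A) (hlie : ∀ i j, y i * y j - y j * y i ∈ Submodule.span k (Set.range y))
    {l m : List I} (h : l.Perm m) : word y l - word y m ∈ wordSpan k y l.length := by
  induction h with
  | nil => simp
  | cons i _ ih =>
    rw [word_cons, word_cons, ← mul_sub]
    exact mul_mem_wordSpan y i ih
  | swap i j l =>
    have e : word y (j :: i :: l) - word y (i :: j :: l) = (y j * y i - y i * y j) * word y l := by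
      simp only [word_cons]; noncomm_ring
    rw [e]
    have key : ∀ a ∈ Submodule.span k (Set.range y),
        a * word y l ∈ wordSpan k y (l.length + 2) := by
      intro a ha
      induction ha using Submodule.span_induction with
      | mem x hx =>
        obtain ⟨i, rfl⟩ := hx
        rw [← word_cons]
        exact word_mem y (by simp)
      | zero => simp
      | add a b _ _ ha hb => rw [add_mul]; exact add_mem ha hb
      | smul c a _ ha => rw [smul_mul_assoc]; exact Submodule.smul_mem _ _ ha
    exact key _ (hlie j i)
  | trans h₁ _ ih₁ ih₂ =>
    rw [← h₁.length_eq] at ih₂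
    simpa using add_mem ih₁ ih₂

lemma exists_mem_wordSpan (y : I → A) (hgen : Algebra.adjoin k (Set.range y) = ⊤) (a : A) :
    ∃ n, a ∈ wordSpan k y n := by
  have ha : a ∈ Submodule.span k (Submonoid.closure (Set.range y) : Set A) := by
    rw [← Algebra.adjoin_eq_span, hgen]; trivial
  induction ha using Submodule.span_induction with
  | mem x hx =>
    obtain ⟨l, hl, rfl⟩ := Submonoid.exists_list_of_mem_closure hx
    obtain ⟨l, rfl⟩ : l ∈ Set.range (List.map y) := by rwa [Set.range_list_map]
    exact ⟨l.length + 1, word_mem y (Nat.lt_succ_self _)⟩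
  | zero => exact ⟨0, zero_mem _⟩
  | add a b _ _ ha hb =>
    obtain ⟨m, hm⟩ := ha
    obtain ⟨n, hn⟩ := hb
    exact ⟨max m n, add_mem (wordSpan_mono y (le_max_left _ _) hm)
      (wordSpan_mono y (le_max_right _ _) hn)⟩
  | smul c a _ ha =>
    obtain ⟨n, hn⟩ := ha
    exact ⟨n, Submodule.smul_mem _ _ hn⟩

/-- The functional `G` vanishes on words of length less than `n`, and on words of length `n` it is
`c` times the product of the values of `ξ` on the letters. For `c = 1` it computes the value at `ξ`
of the degree `n` symbol of an element. -/
def HasSymbol (y : I → A) (ξ : I → k) (G : A →ₗ[k] k) (n : ℕ) (c : k) : Prop :=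
  (∀ l : List I, l.length < n → G (word y l) = 0) ∧
    ∀ l : List I, l.length = n → G (word y l) = c * (l.map ξ).prod

lemma HasSymbol.mulLeft {y : I → A} {ξ : I → k} {G : A →ₗ[k] k} {n : ℕ} {c : k}
    (h : HasSymbol y ξ G (n + 1) c) (i : I) :
    HasSymbol y ξ (G ∘ₗ LinearMap.mulLeft k (y i)) n (c * ξ i) := by
  refine ⟨fun l hl => ?_, fun l hl => ?_⟩
  · simpa [word_cons] using h.1 (i :: l) (by simpa using hl)
  · simpa [word_cons, mul_assoc] using h.2 (i :: l) (by simpa using hl)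

lemma hasSymbol_zero (y : I → A) (ξ : I → k) (G : A →ₗ[k] k) : HasSymbol y ξ G 0 (G 1) := by
  refine ⟨fun l hl => by simp at hl, fun l hl => ?_⟩
  obtain rfl := List.length_eq_zero_iff.1 hl
  simp [word_nil]

/-- The convolution product of two functionals, with respect to `Δ`. -/
noncomputable def conv (Δ : A →ₐ[k] A ⊗[k] A) (F G : A →ₗ[k] k) : A →ₗ[k] k :=
  LinearMap.mul' k k ∘ₗ TensorProduct.map F G ∘ₗ Δ.toLinearMap

lemma conv_one (Δ : A →ₐ[k] A ⊗[k] A) (F G : A →ₗ[k] k) : conv Δ F G 1 = F 1 * G 1 := by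
  simp [conv, Algebra.TensorProduct.one_def]

/-- Left multiplication by a primitive element is a derivation for the convolution product. -/
lemma conv_mul (Δ : A →ₐ[k] A ⊗[k] A) (F G : A →ₗ[k] k) {v : A}
    (hv : Δ v = v ⊗ₜ 1 + 1 ⊗ₜ v) (a : A) :
    conv Δ F G (v * a) = conv Δ (F ∘ₗ LinearMap.mulLeft k v) G a +
      conv Δ F (G ∘ₗ LinearMap.mulLeft k v) a := by
  simp only [conv, LinearMap.comp_apply, AlgHom.toLinearMap_apply, map_mul, hv]
  induction Δ a using TensorProduct.induction_on with
  | zero => simp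
  | tmul b c => simp [add_mul]
  | add b c hb hc =>
    rw [mul_add, map_add, map_add, hb, hc]
    simp only [map_add]
    abel

lemma HasSymbol.conv {y : I → A} {Δ : A →ₐ[k] A ⊗[k] A}
    (hΔ : ∀ i, Δ (y i) = y i ⊗ₜ 1 + 1 ⊗ₜ y i) {ξ : I → k} {F G : A →ₗ[k] k} {m n : ℕ} {c d : k}
    (hF : HasSymbol y ξ F m c) (hG : HasSymbol y ξ G n d) :
    HasSymbol y ξ (conv Δ F G) (m + n) ((m + n).choose m * (c * d)) := by
  suffices H : ∀ (l : List I) (m n : ℕ) (c d : k) (F G : A →ₗ[k] k), HasSymbol y ξ F m c →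
      HasSymbol y ξ G n d → l.length ≤ m + n →
      EnvelopingSemiprimitive.conv Δ F G (word y l) =
        if l.length = m + n then (m + n).choose m * (c * d) * (l.map ξ).prod else 0 by
    refine ⟨fun l hl => ?_, fun l hl => ?_⟩
    · rw [H l m n c d F G hF hG hl.le, if_neg hl.ne]
    · rw [H l m n c d F G hF hG hl.le, if_pos hl]
  clear hF hG F G m n c d
  intro l
  induction l with
  | nil =>
    intro m n c d F G hF hG _
    rw [word_nil, conv_one]
    rcases m with _ | m
    · rcases n with _ | n
      · have h₁ := hF.2 [] rfl
        have h₂ := hG.2 [] rfl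
        simp [word_nil] at h₁ h₂ ⊢
        rw [h₁, h₂]
      · have h₂ := hG.1 [] (by simp)
        rw [word_nil] at h₂
        simp [h₂]
    · have h₁ := hF.1 [] (by simp)
      rw [word_nil] at h₁
      have : ¬ (0 = m + 1 + n) := by omega
      simp [h₁, this]
  | cons i l ih =>
    intro m n c d F G hF hG hl
    rw [List.length_cons] at hl
    rw [word_cons, conv_mul Δ F G (hΔ i), List.length_cons, List.map_cons, List.prod_cons]
    rcases m with _ | m
    · rcases n with _ | n
      · omega
      · rw [ih 0 (n + 1) _ _ _ _ (hasSymbol_zero y ξ _) hG (by omega),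
          ih 0 n _ _ _ _ hF (hG.mulLeft i) (by omega), if_neg (by omega), zero_add]
        by_cases h : l.length = 0 + n
        · rw [if_pos h, if_pos (by omega)]
          simp; ring
        · rw [if_neg h, if_neg (by omega)]
    · rcases n with _ | n
      · rw [ih m 0 _ _ _ _ (hF.mulLeft i) hG (by omega),
          ih (m + 1) 0 _ _ _ _ hF (hasSymbol_zero y ξ _) (by omega),
          if_neg (by omega : ¬ l.length = m + 1 + 0), add_zero]
        by_cases h : l.length = m + 0
        · rw [if_pos h, if_pos (by omega)]
          simp; ring
        · rw [if_neg h, if_neg (by omega)]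
      · rw [ih m (n + 1) _ _ _ _ (hF.mulLeft i) hG (by omega),
          ih (m + 1) n _ _ _ _ hF (hG.mulLeft i) (by omega)]
        by_cases h : l.length = m + n + 1
        · rw [if_pos (by omega), if_pos (by omega), if_pos (by omega)]
          have e : m + 1 + (n + 1) = (m + n + 1) + 1 := by omega
          rw [e, Nat.choose_succ_succ, show m + (n + 1) = m + n + 1 by omega,
            show m + 1 + n = m + n + 1 by omega]
          push_cast
          ring
        · rw [if_neg (by omega), if_neg (by omega), if_neg (by omega), add_zero]

/-- The functional is the `n`-th convolution power, divided by `n!`, of a functional extending `ξ`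
and vanishing at `1`. -/
lemma exists_hasSymbol [CharZero k] {y : I → A} (hy : LinearIndependent k y)
    {Δ : A →ₐ[k] A ⊗[k] A} (hΔ : ∀ i, Δ (y i) = y i ⊗ₜ 1 + 1 ⊗ₜ y i)
    {ε : A →ₐ[k] k} (hε : ∀ i, ε (y i) = 0) (ξ : I → k) (n : ℕ) :
    ∃ G : A →ₗ[k] k, HasSymbol y ξ G n 1 := by
  obtain ⟨f₀, hf₀⟩ : ∃ f₀ : A →ₗ[k] k, ∀ i, f₀ (y i) = ξ i := by
    obtain ⟨f₀, h⟩ := ((Module.Basis.span hy).constr k ξ).exists_extend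
    refine ⟨f₀, fun i => ?_⟩
    have h' := LinearMap.congr_fun h (Module.Basis.span hy i)
    rw [Module.Basis.constr_basis] at h'
    rw [← h', LinearMap.comp_apply, Submodule.subtype_apply, Module.Basis.span_apply]
  -- Subtracting the counit makes the functional vanish at `1`.
  let f : A →ₗ[k] k := f₀ - f₀ 1 • ε.toLinearMap
  have hf : HasSymbol y ξ f 1 1 := by
    refine ⟨fun l hl => ?_, fun l hl => ?_⟩
    · obtain rfl : l = [] := List.length_eq_zero_iff.1 (by omega)
      simp [word_nil, f]
    · obtain ⟨i, rfl⟩ := List.length_eq_one_iff.1 hl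
      simp [word, f, hf₀, hε]
  induction n with
  | zero => exact ⟨ε.toLinearMap, by simpa using hasSymbol_zero y ξ ε.toLinearMap⟩
  | succ n ih =>
    obtain ⟨G, hG⟩ := ih
    have h := hf.conv hΔ hG
    have hn : ((n : k) + 1) ≠ 0 := by exact_mod_cast Nat.succ_ne_zero n
    rw [Nat.choose_one_right, add_comm 1 n] at h
    refine ⟨((n : k) + 1)⁻¹ • conv Δ f G, fun l hl => ?_, fun l hl => ?_⟩
    · simp [h.1 l hl]
    · rw [LinearMap.smul_apply, h.2 l hl, smul_eq_mul]
      push_cast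
      field_simp

lemma HasSymbol.eq_zero {y : I → A} {ξ : I → k} {G : A →ₗ[k] k} {n : ℕ} {c : k}
    (h : HasSymbol y ξ G n c) {a : A} (ha : a ∈ wordSpan k y n) : G a = 0 := by
  induction ha using Submodule.span_induction with
  | mem x hx => obtain ⟨l, hl, rfl⟩ := hx; exact h.1 l hl
  | zero => simp
  | add a b _ _ ha hb => simp [ha, hb]
  | smul c a _ ha => simp [ha]

/-- Multiplicativity of symbols. -/
lemma HasSymbol.mul {y : I → A} {ξ : I → k} {F G H : A →ₗ[k] k} {m n : ℕ}
    (hF : HasSymbol y ξ F m 1) (hG : HasSymbol y ξ G n 1) (hH : HasSymbol y ξ H (m + n) 1)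
    {a b : A} (ha : a ∈ wordSpan k y (m + 1)) (hb : b ∈ wordSpan k y (n + 1)) :
    H (a * b) = F a * G b := by
  induction ha using Submodule.span_induction with
  | mem x hx =>
    obtain ⟨l, hl, rfl⟩ := hx
    induction hb using Submodule.span_induction with
    | mem x hx =>
      obtain ⟨l', hl', rfl⟩ := hx
      rw [← word_append]
      rcases Nat.lt_succ_iff_lt_or_eq.1 hl with h | h
      · rw [hF.1 l h, hH.1 _ (by rw [List.length_append]; omega), zero_mul]
      rcases Nat.lt_succ_iff_lt_or_eq.1 hl' with h' | h'
      · rw [hG.1 l' h', hH.1 _ (by rw [List.length_append]; omega), mul_zero]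
      · rw [hF.2 l h, hG.2 l' h', hH.2 _ (by rw [List.length_append, h, h'])]
        simp
    | zero => simp
    | add a b _ _ ha hb => rw [mul_add, map_add, map_add, ha, hb, mul_add]
    | smul c a _ ha => rw [mul_smul_comm, map_smul, map_smul, ha, mul_smul_comm]
  | zero => simp
  | add a b _ _ ha hb => rw [add_mul, map_add, map_add, ha, hb, add_mul]
  | smul c a _ ha => rw [smul_mul_assoc, map_smul, map_smul, ha, smul_mul_assoc]

/-- An element of degree at most `n` has a symbol polynomial, and if the symbol vanishes then the
degree is less than `n`. -/
lemma exists_symbol (y : I → A)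
    (hlie : ∀ i j, y i * y j - y j * y i ∈ Submodule.span k (Set.range y))
    {n : ℕ} {a : A} (ha : a ∈ wordSpan k y (n + 1)) :
    ∃ p : MvPolynomial I k, (p = 0 → a ∈ wordSpan k y n) ∧
      ∀ (ξ : I → k) (G : A →ₗ[k] k), HasSymbol y ξ G n 1 → G a = MvPolynomial.eval ξ p := by
  -- A linear lift of polynomials to `A`, the letters of each monomial being put in some fixed order.
  let Θ : MvPolynomial I k →ₗ[k] A :=
    (MvPolynomial.basisMonomials I k).constr k fun s => word y s.toMultiset.toList
  have hΘ : ∀ s, Θ (MvPolynomial.monomial s 1) = word y s.toMultiset.toList := fun s => by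
    have h := (MvPolynomial.basisMonomials I k).constr_basis k
      (fun s => word y s.toMultiset.toList) s
    rwa [MvPolynomial.coe_basisMonomials] at h
  suffices H : ∃ p : MvPolynomial I k, a - Θ p ∈ wordSpan k y n ∧
      ∀ (ξ : I → k) (G : A →ₗ[k] k), HasSymbol y ξ G n 1 → G a = MvPolynomial.eval ξ p by
    obtain ⟨p, h₁, h₂⟩ := H
    refine ⟨p, fun h => ?_, h₂⟩
    rwa [h, map_zero, sub_zero] at h₁
  induction ha using Submodule.span_induction with
  | mem x hx =>
    obtain ⟨l, hl, rfl⟩ := hx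
    rcases Nat.lt_succ_iff_lt_or_eq.1 hl with h | h
    · exact ⟨0, by simpa using word_mem y h, fun ξ G hG => by simpa using hG.1 l h⟩
    · classical
      refine ⟨MvPolynomial.monomial (Multiset.toFinsupp (l : Multiset I)) 1, ?_, fun ξ G hG => ?_⟩
      · rw [hΘ, Multiset.toFinsupp_toMultiset, ← h]
        exact word_perm y hlie (Multiset.coe_eq_coe.1 (by simp))
      · rw [hG.2 l h, MvPolynomial.eval_monomial, one_mul, one_mul]
        have e := Finsupp.toMultiset_map (Multiset.toFinsupp (l : Multiset I)) ξ
        have e' := congrArg Multiset.prod e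
        rw [Multiset.toFinsupp_toMultiset, Multiset.map_coe, Multiset.prod_coe,
          Finsupp.prod_toMultiset, Finsupp.prod_mapDomain_index (by simp)
          (fun _ _ _ => pow_add _ _ _)] at e'
        exact e'
  | zero => exact ⟨0, by simp, by simp⟩
  | add a b _ _ ha hb =>
    obtain ⟨p, hp, hp'⟩ := ha
    obtain ⟨q, hq, hq'⟩ := hb
    refine ⟨p + q, ?_, fun ξ G hG => by rw [map_add, map_add, hp' ξ G hG, hq' ξ G hG]⟩
    rw [map_add, add_sub_add_comm]
    exact add_mem hp hq
  | smul c a _ ha =>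
    obtain ⟨p, hp, hp'⟩ := ha
    refine ⟨c • p, ?_, fun ξ G hG => by
      rw [map_smul, hp' ξ G hG, MvPolynomial.smul_eval, smul_eq_mul]⟩
    rw [map_smul, ← smul_sub]
    exact Submodule.smul_mem _ _ hp

/-- In a bialgebra generated by a Lie algebra of primitive elements over a field of characteristic
zero, left-invertible elements are scalars. -/
lemma mem_range_algebraMap_of_mul_eq_one [CharZero k] {y : I → A} (hy : LinearIndependent k y)
    {Δ : A →ₐ[k] A ⊗[k] A} (hΔ : ∀ i, Δ (y i) = y i ⊗ₜ 1 + 1 ⊗ₜ y i)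
    {ε : A →ₐ[k] k} (hε : ∀ i, ε (y i) = 0)
    (hlie : ∀ i j, y i * y j - y j * y i ∈ Submodule.span k (Set.range y))
    (hgen : Algebra.adjoin k (Set.range y) = ⊤) {a b : A} (hab : a * b = 1) :
    ∃ c : k, algebraMap k A c = b := by
  classical
  have h1 : (1 : A) ≠ 0 := fun h => one_ne_zero (α := k) (by rw [← map_one ε, h, map_zero])
  have hdeg : ∀ u : A, u ≠ 0 → ∃ n, u ∈ wordSpan k y (n + 1) ∧ u ∉ wordSpan k y n := by
    intro u hu
    have hex := exists_mem_wordSpan (k := k) y hgen u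
    obtain ⟨n, hn⟩ : ∃ n, Nat.find hex = n + 1 := by
      refine Nat.exists_eq_succ_of_ne_zero fun h => hu ?_
      have := Nat.find_spec hex
      rwa [h, wordSpan_zero, Submodule.mem_bot] at this
    refine ⟨n, hn ▸ Nat.find_spec hex, Nat.find_min hex (by omega)⟩
  obtain ⟨m, ham, ham'⟩ := hdeg a (by rintro rfl; exact h1 (by rw [← hab, zero_mul]))
  obtain ⟨n, hbn, hbn'⟩ := hdeg b (by rintro rfl; exact h1 (by rw [← hab, mul_zero]))
  obtain ⟨p, hp, hp'⟩ := exists_symbol y hlie ham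
  obtain ⟨q, hq, hq'⟩ := exists_symbol y hlie hbn
  rcases Nat.eq_zero_or_pos (m + n) with h0 | hpos
  · obtain rfl : n = 0 := by omega
    have : wordSpan k y (0 + 1) ≤ Submodule.span k {1} := by
      refine Submodule.span_mono ?_
      rintro _ ⟨l, hl, rfl⟩
      obtain rfl : l = [] := List.length_eq_zero_iff.1 (by omega)
      exact word_nil y
    obtain ⟨c, hc⟩ := Submodule.mem_span_singleton.1 (this hbn)
    exact ⟨c, by rw [← hc, Algebra.algebraMap_eq_smul_one]⟩
  · exfalso
    have hpq : p * q = 0 := by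
      refine MvPolynomial.funext fun ξ => ?_
      obtain ⟨F, hF⟩ := exists_hasSymbol hy hΔ hε ξ m
      obtain ⟨G, hG⟩ := exists_hasSymbol hy hΔ hε ξ n
      obtain ⟨H, hH⟩ := exists_hasSymbol hy hΔ hε ξ (m + n)
      rw [map_mul, ← hp' ξ F hF, ← hq' ξ G hG, ← hF.mul hG hH ham hbn, hab, map_zero]
      exact hH.1 [] hpos
    rcases mul_eq_zero.1 hpq with h | h
    · exact ham' (hp h)
    · exact hbn' (hq h)

section Enveloping

attribute [local instance] LieRing.ofAssociativeRing

variable (k : Type*) [Field k] (L : Type*) [LieRing L] [LieAlgebra k L]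

local notation "U" => UniversalEnvelopingAlgebra k L

/-- The comultiplication of the enveloping algebra, for which the elements of `L` are primitive. -/
noncomputable def comul : U →ₐ[k] U ⊗[k] U :=
  UniversalEnvelopingAlgebra.lift k
    { toFun := fun x => UniversalEnvelopingAlgebra.ι k x ⊗ₜ 1 + 1 ⊗ₜ UniversalEnvelopingAlgebra.ι k x
      map_add' := fun x y => by
        rw [map_add, TensorProduct.add_tmul, TensorProduct.tmul_add]; abel
      map_smul' := fun c x => by
        rw [map_smul, TensorProduct.tmul_smul, ← TensorProduct.smul_tmul', smul_add]; rfl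
      map_lie' := fun {x y} => by
        simp only [LieHom.map_lie, LieRing.of_associative_ring_bracket, mul_add, add_mul,
          Algebra.TensorProduct.tmul_mul_tmul, mul_one, one_mul, TensorProduct.sub_tmul,
          TensorProduct.tmul_sub]
        abel }

lemma comul_ι (x : L) : comul k L (UniversalEnvelopingAlgebra.ι k x) =
    UniversalEnvelopingAlgebra.ι k x ⊗ₜ 1 + 1 ⊗ₜ UniversalEnvelopingAlgebra.ι k x :=
  UniversalEnvelopingAlgebra.lift_ι_apply k _ x

/-- The augmentation of the enveloping algebra, which kills `L`. -/
noncomputable def counit : U →ₐ[k] k := UniversalEnvelopingAlgebra.lift k 0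

lemma counit_ι (x : L) : counit k L (UniversalEnvelopingAlgebra.ι k x) = 0 :=
  UniversalEnvelopingAlgebra.lift_ι_apply k _ x

lemma adjoin_range_ι :
    Algebra.adjoin k (Set.range (UniversalEnvelopingAlgebra.ι k : L → U)) = ⊤ := by
  set S := Algebra.adjoin k (Set.range (UniversalEnvelopingAlgebra.ι k : L → U))
  let g : L →ₗ⁅k⁆ S :=
    { toFun := fun x => ⟨UniversalEnvelopingAlgebra.ι k x, Algebra.subset_adjoin ⟨x, rfl⟩⟩
      map_add' := fun x y => Subtype.ext (map_add _ _ _)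
      map_smul' := fun c x => Subtype.ext (map_smul _ _ _)
      map_lie' := fun {x y} => Subtype.ext (LieHom.map_lie _ _ _) }
  have h : S.val.comp (UniversalEnvelopingAlgebra.lift k g) = AlgHom.id k U := by
    apply UniversalEnvelopingAlgebra.hom_ext
    ext x
    change ((UniversalEnvelopingAlgebra.lift k g (UniversalEnvelopingAlgebra.ι k x) : S) : U) =
      UniversalEnvelopingAlgebra.ι k x
    rw [UniversalEnvelopingAlgebra.lift_ι_apply]
    rfl
  refine eq_top_iff.2 fun u _ => ?_
  have hu := AlgHom.congr_fun h u
  rw [AlgHom.id_apply] at hu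
  rw [← hu]
  exact (UniversalEnvelopingAlgebra.lift k g u).2

lemma enveloping_scalar_of_mul_eq_one [CharZero k] {a b : U} (hab : a * b = 1) :
    ∃ c : k, algebraMap k U c = b := by
  let V : Submodule k U := LinearMap.range (UniversalEnvelopingAlgebra.ι k : L →ₗ⁅k⁆ U).toLinearMap
  let B := Module.Basis.ofVectorSpace k V
  let y : _ → U := fun i => (B i : U)
  have hy : LinearIndependent k y :=
    B.linearIndependent.map' V.subtype (Submodule.ker_subtype V)
  have hι : ∀ i, ∃ x : L, UniversalEnvelopingAlgebra.ι k x = y i := fun i => (B i).2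
  have hspan : Submodule.span k (Set.range y) = V := by
    have : Set.range y = V.subtype '' Set.range B := by rw [← Set.range_comp]; rfl
    rw [this, Submodule.span_image, B.span_eq, Submodule.map_subtype_top]
  refine mem_range_algebraMap_of_mul_eq_one hy (Δ := comul k L) (ε := counit k L) ?_ ?_ ?_ ?_ hab
  · intro i
    obtain ⟨x, hx⟩ := hι i
    rw [← hx, comul_ι]
  · intro i
    obtain ⟨x, hx⟩ := hι i
    rw [← hx, counit_ι]
  · intro i j
    obtain ⟨x, hx⟩ := hι i
    obtain ⟨x', hx'⟩ := hι j
    rw [hspan, ← hx, ← hx', ← LieRing.of_associative_ring_bracket, ← LieHom.map_lie]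
    exact ⟨⁅x, x'⁆, rfl⟩
  · rw [eq_top_iff, ← adjoin_range_ι k L]
    refine Algebra.adjoin_le ?_
    rintro _ ⟨x, rfl⟩
    have hx : UniversalEnvelopingAlgebra.ι k x ∈ Submodule.span k (Set.range y) := by
      rw [hspan]; exact ⟨x, rfl⟩
    exact Algebra.span_le_adjoin k _ hx

end Enveloping

end EnvelopingSemiprimitive

/-- The universal enveloping algebra of a finite-dimensional Lie algebra over a field of
characteristic 0 is semiprimitive: its Jacobson radical, the intersection of all maximal
left ideals, is zero. -/
theorem universalEnvelopingAlgebra_semiprimitive (k : Type*) [Field k] [CharZero k]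
    (L : Type*) [LieRing L] [LieAlgebra k L] [FiniteDimensional k L] :
    (⊥ : Ideal (UniversalEnvelopingAlgebra k L)).jacobson = ⊥ := by
  refine eq_bot_iff.2 fun x hx => ?_
  rw [Ideal.mem_jacobson_iff] at hx
  obtain ⟨z, hz⟩ := hx 1
  have hz' : z * (x + 1) = 1 := by
    rw [Ideal.mem_bot, sub_eq_zero, mul_one] at hz
    rw [mul_add, mul_one, hz]
  obtain ⟨c, hc⟩ := EnvelopingSemiprimitive.enveloping_scalar_of_mul_eq_one k L hz'
  have hxd : x = algebraMap k _ (c - 1) := by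
    rw [map_sub, hc, map_one, add_sub_cancel_right]
  rw [Ideal.mem_bot]
  by_cases hd : c - 1 = 0
  · rw [hxd, hd, map_zero]
  · exfalso
    -- With `x` a nonzero scalar, the multiplier `-x⁻¹` turns the condition into `-1 = 0`.
    obtain ⟨w, hw⟩ := hx (algebraMap k _ (-(c - 1)⁻¹))
    rw [Ideal.mem_bot, hxd, mul_assoc, ← map_mul, neg_mul, inv_mul_cancel₀ hd, map_neg, map_one,
      mul_neg, mul_one, neg_add_cancel, zero_sub, neg_eq_zero] at hw
    have := congrArg (EnvelopingSemiprimitive.counit k L) hw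
    rw [map_one, map_zero] at this
    exact one_ne_zero this
end

section
/- (Skryabin) Let H be a Hopf algebra over a field k which is Noetherian as a ring. Then the antipode S : H → H is injective. -/
/-!
A left Noetherian ring `H` is stably finite: one-sided inverses of square matrices over `H` are
two-sided. This is the only consequence of the Noetherian hypothesis that is needed.

Suppose `S h = 0`. The element `h` lies in a finite-dimensional subspace `V` with `Δ V ⊆ H ⊗ V`
(`exists_finite_left_coideal`). Choose a basis `b` of `V` that starts with a basis of
`W = V ∩ ker S`, and write `Δ bᵢ = ∑ⱼ Xᵢⱼ ⊗ bⱼ`. The matrix `X` is comultiplicative, so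
`Y = S(X)` is its two-sided inverse, and uniqueness of inverses of matrices over `H ⊗ H` gives
`Δ Yᵢⱼ = ∑ₖ Yₖⱼ ⊗ Yᵢₖ`. Hence `0 = Δ (S w) = ∑ₖ S bₖ ⊗ Yᵢₖ` for `w = bᵢ ∈ W`, and since `S` is
injective on the span of the `bₖ` outside `W`, the block of `Y` with rows in `W` and columns outside
`W` vanishes. Comparing blocks in `Y X = 1`, the diagonal block `Y₁₁` has the right inverse `X₁₁`
and satisfies `Y₁₁ X₁₂ = 0`; stable finiteness forces `X₁₂ = 0`. So `Δ W ⊆ H ⊗ W`, and because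
`ε = ε ∘ S` vanishes on `W`, the counit axiom yields `W = 0`.
-/

open scoped TensorProduct
open Coalgebra HopfAlgebra

section Helpers

variable {k : Type*} [Field k]

/-- Coefficients against a linearly independent family in the right tensor factor are unique. -/
lemma tmul_coeff_right_unique {M N ι : Type*} [AddCommGroup M] [Module k M] [AddCommGroup N]
    [Module k N] [Fintype ι] {b : ι → N} (hb : LinearIndependent k b) {x y : ι → M}
    (h : ∑ j, x j ⊗ₜ[k] b j = ∑ j, y j ⊗ₜ[k] b j) : x = y := by
  classical
  obtain ⟨g, hg⟩ := (Fintype.linearCombination k b).exists_leftInverse_of_injective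
    (LinearMap.ker_eq_bot.2 (by
      exact linearIndependent_iff_injective_fintypeLinearCombination.1 hb))
  have hgb : ∀ i, g (b i) = Pi.single i 1 := fun i => by
    have := LinearMap.congr_fun hg (Pi.single i 1)
    simpa [Fintype.linearCombination_apply_single] using this
  funext i
  have := congrArg (fun t => TensorProduct.rid k M
    ((LinearMap.proj i ∘ₗ g : N →ₗ[k] k).lTensor M t)) h
  simpa [map_sum, hgb, Pi.single_apply] using this

/-- Coefficients against a linearly independent family in the left tensor factor are unique. -/
lemma tmul_coeff_left_unique {M N ι : Type*} [AddCommGroup M] [Module k M] [AddCommGroup N]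
    [Module k N] [Fintype ι] {b : ι → N} (hb : LinearIndependent k b) {x y : ι → M}
    (h : ∑ j, b j ⊗ₜ[k] x j = ∑ j, b j ⊗ₜ[k] y j) : x = y := by
  refine tmul_coeff_right_unique hb ?_
  have := congrArg (TensorProduct.comm k N M) h
  simpa [map_sum] using this

/-- A finite-dimensional space has a basis that starts with a basis of the kernel of a given linear
map and continues with a family that the map sends to a linearly independent one. -/
lemma exists_basis_adapted_to_ker {V N : Type*} [AddCommGroup V] [Module k V]
    [FiniteDimensional k V] [AddCommGroup N] [Module k N] (T : V →ₗ[k] N) :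
    ∃ (m n : ℕ) (b : Module.Basis (Fin m ⊕ Fin n) k V), (∀ i, T (b (Sum.inl i)) = 0) ∧
      LinearIndependent k (fun j => T (b (Sum.inr j))) ∧
      ∀ v, T v = 0 → v ∈ Submodule.span k (Set.range fun i => b (Sum.inl i)) := by
  obtain ⟨U, hU⟩ := (LinearMap.ker T).exists_isCompl
  let bW := Module.finBasis k (LinearMap.ker T)
  let bU := Module.finBasis k U
  let b := (bW.prod bU).map (Submodule.prodEquivOfIsCompl _ U hU)
  have hinl : ∀ i, b (Sum.inl i) = (bW i : V) := fun i => by simp [b]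
  have hinr : ∀ i, b (Sum.inr i) = (bU i : V) := fun i => by simp [b]
  refine ⟨_, _, b, fun i => ?_, ?_, fun v hv => ?_⟩
  · rw [hinl]
    exact (bW i).2
  · have hli : LinearIndependent k (fun j => (T ∘ₗ U.subtype) (bU j)) :=
      bU.linearIndependent.map' _ (by
        rw [LinearMap.ker_comp, ← Submodule.disjoint_iff_comap_eq_bot]
        exact hU.symm.disjoint)
    simp only [hinr]
    exact hli
  · simp only [hinl, Submodule.mem_span_range_iff_exists_fun]
    refine ⟨bW.repr ⟨v, hv⟩, ?_⟩
    have := congrArg (LinearMap.ker T).subtype (bW.sum_repr ⟨v, hv⟩)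
    simpa only [map_sum, map_smul, Submodule.subtype_apply] using this

/-- Every element of a coalgebra lies in a finite-dimensional left coideal. -/
lemma exists_finite_left_coideal {C : Type*} [AddCommGroup C] [Module k C] [Coalgebra k C]
    (h : C) : ∃ V : Submodule k C, FiniteDimensional k V ∧ h ∈ V ∧
      ∀ v ∈ V, comul (R := k) v ∈ LinearMap.range (V.subtype.lTensor C) := by
  classical
  let B := Module.Basis.ofVectorSpace k C
  obtain ⟨g, hg⟩ := TensorProduct.eq_repr_basis_left B (comul (R := k) h)
  refine ⟨Submodule.span k (g.support.image g : Set C), ?_, ?_, ?_⟩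
  · exact FiniteDimensional.span_of_finite k (Finset.finite_toSet _)
  · have h1 := congrArg (TensorProduct.lid k C) (rTensor_counit_comul (R := k) h)
    rw [← hg] at h1
    simp only [Finsupp.sum, map_sum, LinearMap.rTensor_tmul, TensorProduct.lid_tmul,
      one_smul] at h1
    rw [← h1]
    refine Submodule.sum_mem _ fun i hi => Submodule.smul_mem _ _ (Submodule.subset_span ?_)
    exact Finset.mem_coe.2 (Finset.mem_image_of_mem g hi)
  · intro v hv
    suffices hle : Submodule.span k (g.support.image g : Set C) ≤
        (LinearMap.range ((Submodule.span k (g.support.image g : Set C)).subtype.lTensor C)).comap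
          (comul (R := k)) from hle hv
    refine Submodule.span_le.2 ?_
    intro v hv
    obtain ⟨i, hi, rfl⟩ := Finset.mem_image.1 (Finset.mem_coe.1 hv)
    have h1 := coassoc_apply (R := k) h
    rw [← hg] at h1
    simp only [Finsupp.sum, map_sum, LinearMap.rTensor_tmul, LinearMap.lTensor_tmul] at h1
    -- apply the `i`-th coordinate functional in the first tensor factor
    have h2 := congrArg (fun t => TensorProduct.lid k (C ⊗[k] C) ((B.coord i).rTensor _ t)) h1
    simp only [map_sum, LinearMap.rTensor_tmul, TensorProduct.lid_tmul, Module.Basis.coord_apply,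
      Module.Basis.repr_self] at h2
    have h3 : ∑ x ∈ g.support, (Finsupp.single x (1 : k)) i • comul (R := k) (g x) =
        comul (R := k) (g i) := by
      rw [Finset.sum_eq_single i (fun j _ hj => by simp [hj])
        (fun h => absurd hi h)]
      simp
    rw [h3] at h2
    rw [SetLike.mem_coe, Submodule.mem_comap, ← h2]
    refine Submodule.sum_mem _ fun j hj => ?_
    have key : ∀ t : C ⊗[k] C, TensorProduct.lid k (C ⊗[k] C) ((B.coord i).rTensor _
        (TensorProduct.assoc k C C C (t ⊗ₜ[k] g j))) =
        (TensorProduct.lid k C ((B.coord i).rTensor _ t)) ⊗ₜ[k] g j := by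
      intro t
      induction t with
      | zero => simp
      | tmul x y => simp [TensorProduct.smul_tmul']
      | add x y hx hy => simp only [TensorProduct.add_tmul, map_add, hx, hy]
    rw [key]
    exact ⟨_ ⊗ₜ ⟨g j, Submodule.subset_span
      (Finset.mem_coe.2 (Finset.mem_image_of_mem g hj))⟩, by simp; rfl⟩

variable {H : Type*} [Ring H] [HopfAlgebra k H]

/-- The antipode of a comultiplicative matrix is its inverse, and is therefore
anti-comultiplicative. -/
lemma comatrix_antipode {ι : Type*} [Fintype ι] [DecidableEq ι] (X : Matrix ι ι H)
    (hX : ∀ i j, comul (R := k) (X i j) = ∑ l, X i l ⊗ₜ[k] X l j)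
    (hε : ∀ i j, counit (R := k) (X i j) = (1 : Matrix ι ι k) i j) :
    X.map (antipode k) * X = 1 ∧
      ∀ i j, comul (R := k) (antipode k (X i j)) =
        ∑ l, antipode k (X l j) ⊗ₜ[k] antipode k (X i l) := by
  have hYX : X.map (antipode k) * X = 1 := by
    ext i j
    have := mul_antipode_rTensor_comul_apply (R := k) (X i j)
    rw [hX, hε] at this
    simp only [map_sum, LinearMap.rTensor_tmul, LinearMap.mul'_apply] at this
    rw [Matrix.mul_apply]
    simp only [Matrix.map_apply, this]
    by_cases hij : i = j <;> simp [Matrix.one_apply, hij]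
  have hXY : X * X.map (antipode k) = 1 := by
    ext i j
    have := mul_antipode_lTensor_comul_apply (R := k) (X i j)
    rw [hX, hε] at this
    simp only [map_sum, LinearMap.lTensor_tmul, LinearMap.mul'_apply] at this
    rw [Matrix.mul_apply]
    simp only [Matrix.map_apply, this]
    by_cases hij : i = j <;> simp [Matrix.one_apply, hij]
  refine ⟨hYX, ?_⟩
  set Y : Matrix ι ι H := X.map (antipode k) with hY
  let L : H →+* H ⊗[k] H := (Algebra.TensorProduct.includeLeft : H →ₐ[k] H ⊗[k] H).toRingHom
  let R : H →+* H ⊗[k] H := (Algebra.TensorProduct.includeRight : H →ₐ[k] H ⊗[k] H).toRingHom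
  let D : H →+* H ⊗[k] H := (Bialgebra.comulAlgHom k H).toRingHom
  have hD : X.map D = X.map L * X.map R := by
    ext i j
    simp only [Matrix.map_apply, Matrix.mul_apply]
    change comul (R := k) (X i j) = _
    rw [hX]
    exact Finset.sum_congr rfl fun l _ => by
      change _ = (X i l ⊗ₜ[k] (1 : H)) * ((1 : H) ⊗ₜ[k] X l j)
      simp
  have one_map : ∀ f : H →+* H ⊗[k] H, (1 : Matrix ι ι H).map f = 1 := fun f =>
    Matrix.map_one f (map_zero f) (map_one f)
  have hDY : Y.map D * X.map D = 1 := by rw [← Matrix.map_mul, hYX, one_map]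
  have hR : X.map R * Y.map R = 1 := by rw [← Matrix.map_mul, hXY, one_map]
  have hL : X.map L * Y.map L = 1 := by rw [← Matrix.map_mul, hXY, one_map]
  have hinv : X.map D * (Y.map R * Y.map L) = 1 := by
    rw [hD, mul_assoc, ← mul_assoc (X.map R), hR, one_mul, hL]
  have heq : Y.map D = Y.map R * Y.map L := left_inv_eq_right_inv hDY hinv
  intro i j
  have := congrFun (congrFun heq i) j
  simp only [Matrix.map_apply, Matrix.mul_apply] at this
  change comul (R := k) (Y i j) = _ at this
  change comul (R := k) (Y i j) = _
  rw [this]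
  exact Finset.sum_congr rfl fun l _ => by
    change ((1 : H) ⊗ₜ[k] Y i l) * (Y l j ⊗ₜ[k] (1 : H)) = _
    simp [hY]

/-- The matrix core of the argument: a basis of a finite-dimensional left coideal whose first part
is killed by the antipode, and on whose second part the antipode stays linearly independent, has no
first part. -/
lemma eq_zero_of_adapted_basis [IsStablyFiniteRing H] {m n : Type*} [Fintype m] [Fintype n]
    (b : m ⊕ n → H) (hb : LinearIndependent k b) (X : Matrix (m ⊕ n) (m ⊕ n) H)
    (hX : ∀ i, comul (R := k) (b i) = ∑ j, X i j ⊗ₜ[k] b j)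
    (hker : ∀ i, antipode k (b (Sum.inl i)) = 0)
    (hind : LinearIndependent k fun j => antipode k (b (Sum.inr j))) (i : m) :
    b (Sum.inl i) = 0 := by
  classical
  have hΔ : ∀ i j, comul (R := k) (X i j) = ∑ l, X i l ⊗ₜ[k] X l j := by
    intro i
    refine congrFun (tmul_coeff_right_unique hb ?_)
    have h1 := coassoc_apply (R := k) (b i)
    simp only [hX, map_sum, LinearMap.rTensor_tmul, LinearMap.lTensor_tmul] at h1
    have h2 := congrArg (TensorProduct.assoc k H H H).symm h1
    simp only [map_sum, LinearEquiv.symm_apply_apply, TensorProduct.tmul_sum,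
      TensorProduct.assoc_symm_tmul] at h2
    rw [h2, Finset.sum_comm]
    simp only [TensorProduct.sum_tmul]
  have hε : ∀ i j, counit (R := k) (X i j) = (1 : Matrix (m ⊕ n) (m ⊕ n) k) i j := by
    intro i
    refine congrFun (tmul_coeff_right_unique hb ?_)
    have h1 := rTensor_counit_comul (R := k) (b i)
    simp only [hX, map_sum, LinearMap.rTensor_tmul] at h1
    rw [h1]
    rw [Finset.sum_eq_single i (by
      intro j _ hj
      simp [Matrix.one_apply_ne' hj]) (fun h => absurd (Finset.mem_univ i) h)]
    simp
  obtain ⟨hYX, hΔY⟩ := comatrix_antipode X hΔ hε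
  have hbX : ∀ i, b i = ∑ j, counit (R := k) (b j) • X i j := by
    intro i
    have h1 := congrArg (TensorProduct.rid k H) (lTensor_counit_comul (R := k) (b i))
    simpa [hX, map_sum] using h1.symm
  have hSb : ∀ i, antipode k (b i) = ∑ j, counit (R := k) (b j) • antipode k (X i j) := by
    intro i
    conv_lhs => rw [hbX i]
    simp [map_sum]
  have hΔS : ∀ i, comul (R := k) (antipode k (b i)) =
      ∑ l, antipode k (b l) ⊗ₜ[k] antipode k (X i l) := by
    intro i
    conv_lhs => rw [hSb i]
    simp only [map_sum, map_smul, hΔY, Finset.smul_sum]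
    rw [Finset.sum_comm]
    refine Finset.sum_congr rfl fun l _ => ?_
    rw [hSb l, TensorProduct.sum_tmul]
    simp only [TensorProduct.smul_tmul']
  have hY12 : ∀ (i : m) (j : n), antipode k (X (Sum.inl i) (Sum.inr j)) = 0 := by
    intro i
    refine congrFun (tmul_coeff_left_unique (y := fun _ => 0) hind ?_)
    have := hΔS (Sum.inl i)
    rw [hker, map_zero, Fintype.sum_sum_type] at this
    simpa [hker] using this.symm
  set Y : Matrix (m ⊕ n) (m ⊕ n) H := X.map (antipode k) with hY
  have hA : Y.toBlocks₁₁ * X.toBlocks₁₁ = 1 := by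
    ext i j
    have := congrFun (congrFun hYX (Sum.inl i)) (Sum.inl j)
    rw [Matrix.mul_apply, Fintype.sum_sum_type] at this
    simpa [Matrix.mul_apply, hY, hY12, Matrix.toBlocks₁₁, Matrix.one_apply] using this
  have hB : Y.toBlocks₁₁ * X.toBlocks₁₂ = 0 := by
    ext i j
    have := congrFun (congrFun hYX (Sum.inl i)) (Sum.inr j)
    rw [Matrix.mul_apply, Fintype.sum_sum_type] at this
    simpa [Matrix.mul_apply, hY, hY12, Matrix.toBlocks₁₁, Matrix.toBlocks₁₂] using this
  have hA' : X.toBlocks₁₁ * Y.toBlocks₁₁ = 1 := mul_eq_one_symm hA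
  have hX12 : X.toBlocks₁₂ = 0 := by
    rw [← Matrix.one_mul X.toBlocks₁₂, ← hA', Matrix.mul_assoc, hB, Matrix.mul_zero]
  rw [hbX, Fintype.sum_sum_type]
  have hε0 : ∀ j, counit (R := k) (b (Sum.inl j)) = 0 := fun j => by
    rw [← counit_antipode, hker, map_zero]
  have hX0 : ∀ j, X (Sum.inl i) (Sum.inr j) = 0 := fun j => congrFun (congrFun hX12 i) j
  simp [hε0, hX0]

end Helpers

/-- (Skryabin) The antipode of a Noetherian Hopf algebra is injective. -/
theorem antipode_injective_of_noetherian (k : Type*) [Field k]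
    (H : Type*) [Ring H] [HopfAlgebra k H] [IsNoetherianRing H] :
    Function.Injective (HopfAlgebra.antipode (R := k) (A := H)) := by
  classical
  rw [injective_iff_map_eq_zero]
  intro h hh
  obtain ⟨V, hfin, hhV, hV⟩ := exists_finite_left_coideal (k := k) h
  obtain ⟨m, n, bV, hker, hind, hspan⟩ := exists_basis_adapted_to_ker (antipode k ∘ₗ V.subtype)
  have hc : ∀ i, ∃ c : Fin m ⊕ Fin n → H,
      comul (R := k) (bV i : H) = ∑ j, c j ⊗ₜ[k] (bV j : H) := by
    intro i
    obtain ⟨t, ht⟩ := hV (bV i) (bV i).2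
    obtain ⟨c, rfl⟩ := TensorProduct.eq_repr_basis_right bV t
    refine ⟨c, ?_⟩
    rw [← ht, Finsupp.sum_fintype _ _ (by simp)]
    simp [map_sum]
  choose X hX using hc
  have hzero : ∀ i, bV (Sum.inl i) = 0 := fun i => Subtype.ext <|
    eq_zero_of_adapted_basis (k := k) (fun i => (bV i : H))
      (bV.linearIndependent.map' V.subtype V.ker_subtype) X hX hker hind i
  have hw := hspan ⟨h, hhV⟩ hh
  simp only [hzero, Submodule.mem_span_range_iff_exists_fun, smul_zero,
    Finset.sum_const_zero, exists_const] at hw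
  exact congrArg Subtype.val hw.symm
end
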